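/- arXiv:1704.05792 — 7 statements merged into one kernel-verified Lean document; each statement's English description precedes it below -/
import Mathlib

section
/- Theorem 4.1(c): If a locally finite partially ordered set satisfies Axiom VT and has Property NTC, then it satisfies Axiom D3⁻C. -/
/-!
Since `[w, z]` is finite, every element of it other than `w` lies above a cover of `w`, so
`[w, z]` consists of `w` and the intervals `[a, z]` with `a` a cover of `w`. If `{w; x, y; z}` is
a diamond, Property NTC says that `x` and `y` are the only covers of `w`, and the intervals
`[x, z]` and `[y, z]` have only their endpoints. So every diamond is an interval, and any top of a
vee provided by Axiom VT completes it.
-/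

namespace DCompleteStmt

variable {α : Type*}

/-- A vee (d₃⁻-set) `{w; x, y}`: three distinct elements with `w ⋖ x` and `w ⋖ y`. -/
def IsVee [PartialOrder α] (w x y : α) : Prop :=
  x ≠ y ∧ w ⋖ x ∧ w ⋖ y

/-- A diamond `{w; x, y; z}`: four distinct elements with
`w ⋖ x`, `w ⋖ y`, `x ⋖ z`, `y ⋖ z`. -/
def IsDiamond [PartialOrder α] (w x y z : α) : Prop :=
  x ≠ y ∧ w ⋖ x ∧ w ⋖ y ∧ x ⋖ z ∧ y ⋖ z

/-- A d₃-interval: an interval `[w,z]` that as a set equals a diamond `{w; x, y; z}`. -/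
def IsD3Interval [PartialOrder α] (w x y z : α) : Prop :=
  IsDiamond w x y z ∧ Set.Icc w z = {w, x, y, z}

/-- Axiom VT: every vee has a top. -/
def AxVT (α : Type*) [PartialOrder α] : Prop :=
  ∀ w x y : α, IsVee w x y → ∃ z : α, x ⋖ z ∧ y ⋖ z

/-- Axiom NCC: there are no overlapping vees. -/
def AxNCC (α : Type*) [PartialOrder α] : Prop :=
  ¬ ∃ w w' x y : α, w ≠ w' ∧ x ≠ y ∧ w ⋖ x ∧ w ⋖ y ∧ w' ⋖ x ∧ w' ⋖ y

/-- Property UT: every vee has exactly one top. -/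
def PropUT (α : Type*) [PartialOrder α] : Prop :=
  ∀ w x y : α, IsVee w x y → ∃! z : α, x ⋖ z ∧ y ⋖ z

/-- Axiom D3⁻C: every vee has a completing element. -/
def AxD3C (α : Type*) [PartialOrder α] : Prop :=
  ∀ w x y : α, IsVee w x y → ∃ z : α, IsD3Interval w x y z

/-- Property NTC: no element is covered by three pairwise distinct elements. -/
def PropNTC (α : Type*) [PartialOrder α] : Prop :=
  ¬ ∃ w x y u : α, x ≠ y ∧ x ≠ u ∧ y ≠ u ∧ w ⋖ x ∧ w ⋖ y ∧ w ⋖ u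

/-- Property SS: every short interval has cardinality 3 or 4. -/
def PropSS (α : Type*) [PartialOrder α] : Prop :=
  ∀ w u z : α, w ⋖ u → u ⋖ z →
    (Set.Icc w z).ncard = 3 ∨ (Set.Icc w z).ncard = 4

/-- Axiom FT: the top of every diamond covers only the elbows of the diamond. -/
def AxFT (α : Type*) [PartialOrder α] : Prop :=
  ∀ w x y z : α, IsDiamond w x y z → ∀ u : α, u ⋖ z → u = x ∨ u = y

/-- Axiom D3MF: the maximum of every d₃-interval covers only the elbows. -/
def AxD3MF (α : Type*) [PartialOrder α] : Prop :=
  ∀ w x y z : α, IsD3Interval w x y z → ∀ u : α, u ⋖ z → u = x ∨ u = y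

/-- Axiom D3MD: two d₃-intervals with the same maximum element coincide as sets. -/
def AxD3MD (α : Type*) [PartialOrder α] : Prop :=
  ∀ w x y z w' x' y' : α, IsD3Interval w x y z → IsD3Interval w' x' y' z →
    ({w, x, y, z} : Set α) = {w', x', y', z}

/-- Axiom D3⁻CF: every vee has a completing element covering only the elbows. -/
def AxD3CF (α : Type*) [PartialOrder α] : Prop :=
  ∀ w x y : α, IsVee w x y →
    ∃ z : α, IsD3Interval w x y z ∧ ∀ u : α, u ⋖ z → u = x ∨ u = y

/-- Property DAI: every diamond is an interval. -/
def PropDAI (α : Type*) [PartialOrder α] : Prop :=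
  ∀ w x y z : α, IsDiamond w x y z → Set.Icc w z = {w, x, y, z}

/-- Property UC3: every vee has exactly one completing element. -/
def PropUC3 (α : Type*) [PartialOrder α] : Prop :=
  ∀ w x y : α, IsVee w x y → ∃! z : α, IsD3Interval w x y z

/-- Property UPUE: upward propagation of up edges. -/
def PropUPUE (α : Type*) [PartialOrder α] : Prop :=
  ∀ w x y : α, w ≤ y → w ⋖ x → ¬ x ≤ y → ∃ z : α, y ⋖ z ∧ x ≤ z

/-- A covering chain `a = f 0 ⋖ f 1 ⋖ ⋯ ⋖ f n = b` of length `n`. -/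
def IsCovChain [PartialOrder α] (f : ℕ → α) (n : ℕ) (a b : α) : Prop :=
  f 0 = a ∧ f n = b ∧ ∀ i < n, f i ⋖ f (i + 1)

/-- Connectedness via the Hasse diagram (covering graph). -/
def HasseConnected (α : Type*) [PartialOrder α] : Prop :=
  ∀ a b : α, Relation.ReflTransGen (fun u v : α => u ⋖ v ∨ v ⋖ u) a b

/-- Property UM: a unique maximal element. -/
def PropUM (α : Type*) [PartialOrder α] : Prop :=
  ∃! z : α, IsMax z

/-- Property CLMEE: a unique maximal element, and all covering chains from any
element to it have equal length. -/
def PropCLMEE (α : Type*) [PartialOrder α] : Prop :=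
  ∃ z : α, IsMax z ∧ (∀ z' : α, IsMax z' → z' = z) ∧
    ∀ (w : α) (n m : ℕ) (f g : ℕ → α),
      IsCovChain f n w z → IsCovChain g m w z → n = m

/-- The poset is ranked. -/
def IsRanked (α : Type*) [PartialOrder α] : Prop :=
  ∃ ρ : α → ℤ, ∀ x y : α, x ⋖ y → ρ y = ρ x + 1

/-- Property CLE: whenever `x < y`, all covering chains from `x` to `y`
have equal length. -/
def PropCLE (α : Type*) [PartialOrder α] : Prop :=
  ∀ x y : α, x < y → ∀ (n m : ℕ) (f g : ℕ → α),
    IsCovChain f n x y → IsCovChain g m x y → n = m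

section

variable [PartialOrder α] {w x y z : α}

theorem Ioc_eq_biUnion_covBy_Icc [IsStronglyAtomic α] (w z : α) :
    Set.Ioc w z = ⋃ a ∈ {a | w ⋖ a}, Set.Icc a z := by
  ext c
  simp only [Set.mem_Ioc, Set.mem_iUnion₂, Set.mem_ofPred_eq, Set.mem_Icc, exists_prop]
  constructor
  · rintro ⟨hwc, hcz⟩
    obtain ⟨a, hwa, hac⟩ := exists_covBy_le_of_lt hwc
    exact ⟨a, hwa, hac, hcz⟩
  · rintro ⟨a, hwa, hac, hcz⟩
    exact ⟨hwa.lt.trans_le hac, hcz⟩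

theorem IsDiamond.isVee (h : IsDiamond w x y z) : IsVee w x y :=
  ⟨h.1, h.2.1, h.2.2.1⟩

theorem IsDiamond.Icc_eq_of_setOf_covBy_eq_pair [IsStronglyAtomic α]
    (h : IsDiamond w x y z) (hcov : {a | w ⋖ a} = {x, y}) :
    Set.Icc w z = {w, x, y, z} := by
  obtain ⟨-, hwx, -, hxz, hyz⟩ := h
  calc
    Set.Icc w z = insert w (Set.Ioc w z) := (Set.Ioc_insert_left (hwx.le.trans hxz.le)).symm
    _ = insert w (Set.Icc x z ∪ Set.Icc y z) := by
      rw [Ioc_eq_biUnion_covBy_Icc, hcov, Set.biUnion_pair]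
    _ = insert w ({x, z} ∪ {y, z}) := by rw [hxz.Icc_eq, hyz.Icc_eq]
    _ = {w, x, y, z} := by
      rw [Set.insert_union, Set.singleton_union, Set.insert_comm z y, Set.pair_eq_singleton]

theorem PropNTC.setOf_covBy_eq_pair (hNTC : PropNTC α) (hv : IsVee w x y) :
    {a | w ⋖ a} = {x, y} := by
  obtain ⟨hxy, hwx, hwy⟩ := hv
  refine Set.Subset.antisymm (fun a hwa => ?_) (Set.pair_subset hwx hwy)
  by_contra ha
  obtain ⟨hax, hay⟩ : a ≠ x ∧ a ≠ y := by
    simpa only [Set.mem_insert_iff, Set.mem_singleton_iff, not_or] using ha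
  exact hNTC ⟨w, x, y, a, hxy, hax.symm, hay.symm, hwx, hwy, hwa⟩

theorem PropNTC.propDAI [IsStronglyAtomic α] (hNTC : PropNTC α) : PropDAI α :=
  fun _ _ _ _ h => h.Icc_eq_of_setOf_covBy_eq_pair (hNTC.setOf_covBy_eq_pair h.isVee)

theorem AxVT.axD3C_of_propDAI (hVT : AxVT α) (hDAI : PropDAI α) : AxD3C α := by
  rintro w x y ⟨hxy, hwx, hwy⟩
  obtain ⟨z, hxz, hyz⟩ := hVT w x y ⟨hxy, hwx, hwy⟩
  have hdiamond : IsDiamond w x y z := ⟨hxy, hwx, hwy, hxz, hyz⟩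
  exact ⟨z, hdiamond, hDAI w x y z hdiamond⟩

end

theorem stmt_1_general {α : Type*} [PartialOrder α] [IsStronglyAtomic α]
    (hVT : AxVT α) (hNTC : PropNTC α) : AxD3C α :=
  hVT.axD3C_of_propDAI hNTC.propDAI

/-- Theorem 4.1(c): VT and NTC imply D3⁻C. -/
theorem stmt_1 {α : Type*} [PartialOrder α] (hLF : ∀ a b : α, (Set.Icc a b).Finite)
    (hVT : AxVT α) (hNTC : PropNTC α) : AxD3C α := by
  let := LocallyFiniteOrder.ofFiniteIcc hLF
  exact stmt_1_general hVT hNTC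

end DCompleteStmt
end

section
/- Theorem 4.1(o): If a locally finite partially ordered set satisfies Axiom VT, then it has Property UPUE: whenever w ≤ y, w ⋖ x, and x ≰ y, there exists z with y ⋖ z and x ≤ z. -/
namespace DCompleteStmt

variable {α : Type*}

/-! The vee axiom makes `⋖` a relation whose one-step forks close up in at most one step on each
side. Such a fork can be pushed along a covering chain from `w` to `y`: the edge `w ⋖ x` becomes
either an edge `y ⋖ z` with `x ≤ z`, or it collapses and `x ≤ y`. -/

open Relation

theorem exists_reflGen_and_reflTransGen_of_rel {r : α → α → Prop} {a b c : α}
    (hr : ∀ a b c, r a b → r a c → ∃ d, ReflGen r b d ∧ ReflTransGen r c d)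
    (hab : ReflTransGen r a b) (hac : r a c) : ∃ d, ReflGen r b d ∧ ReflTransGen r c d := by
  induction hab with
  | refl => exact ⟨c, .single hac, .refl⟩
  | @tail b b' _ hbb' ih =>
    obtain ⟨d, hbd, hcd⟩ := ih
    cases hbd with
    | refl => exact ⟨b', .refl, hcd.tail hbb'⟩
    | single hbd =>
      obtain ⟨e, hb'e, hde⟩ := hr b b' d hbb' hbd
      exact ⟨e, hb'e, hcd.trans hde⟩

section PartialOrder

variable [PartialOrder α]

theorem le_of_reflTransGen_covBy {a b : α} (h : ReflTransGen (· ⋖ ·) a b) : a ≤ b := by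
  simpa only [reflTransGen_eq_self] using
    ReflTransGen.mono (p := (· ≤ ·)) (fun _ _ => CovBy.le) a b h

theorem AxVT.exists_reflGen_covBy (hVT : AxVT α) {w x y : α} (hwx : w ⋖ x) (hwy : w ⋖ y) :
    ∃ z, ReflGen (· ⋖ ·) x z ∧ ReflGen (· ⋖ ·) y z := by
  obtain rfl | hxy := eq_or_ne x y
  · exact ⟨x, .refl, .refl⟩
  · obtain ⟨z, hxz, hyz⟩ := hVT w x y ⟨hxy, hwx, hwy⟩
    exact ⟨z, .single hxz, .single hyz⟩

theorem stmt_12_general (hchain : ∀ a b : α, a ≤ b → ReflTransGen (· ⋖ ·) a b)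
    (hVT : AxVT α) : PropUPUE α := by
  intro w x y hwy hwx hxy
  have fork_closes (a b c : α) (hab : a ⋖ b) (hac : a ⋖ c) :
      ∃ d, ReflGen (· ⋖ ·) b d ∧ ReflTransGen (· ⋖ ·) c d :=
    (hVT.exists_reflGen_covBy hab hac).imp fun _ h => h.imp_right ReflGen.to_reflTransGen
  obtain ⟨z, hyz, hxz⟩ :=
    exists_reflGen_and_reflTransGen_of_rel fork_closes (hchain w y hwy) hwx
  have x_le_z : x ≤ z := le_of_reflTransGen_covBy hxz
  cases hyz with
  | refl => exact absurd x_le_z hxy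
  | single hyz => exact ⟨z, hyz, x_le_z⟩

end PartialOrder

/-- Theorem 4.1(o): VT implies UPUE. -/
theorem stmt_12 {α : Type*} [PartialOrder α] (hLF : ∀ a b : α, (Set.Icc a b).Finite)
    (hVT : AxVT α) : PropUPUE α := by
  let _ : LocallyFiniteOrder α := .ofFiniteIcc hLF
  exact stmt_12_general (fun _ _ => le_iff_reflTransGen_covBy.mp) hVT

end DCompleteStmt
end

section
/- Corollary 4.2: A locally finite partially ordered set satisfies Axiom FT if and only if it satisfies Axiom D3MF and has Property DAI. -/
namespace DCompleteStmt

variable {α : Type*}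

/-!
In a locally finite order, or more generally a strongly coatomic one, every element of `[w, z]`
other than `z` lies below some `u ⋖ z`, so `[w, z]` is `{z}` together with the intervals `[w, u]`
for `u ⋖ z`. At the top of a diamond, FT leaves only the elbows `x` and `y` as such `u`, and
`[w, x] = {w, x}`, `[w, y] = {w, y}` because these are covers; so every diamond is an interval.
-/

section PartialOrder

open Set

variable [PartialOrder α] {w x y z : α}

theorem Ico_eq_biUnion_covBy [IsStronglyCoatomic α] (a b : α) :
    Ico a b = ⋃ u ∈ {u | u ⋖ b}, Icc a u := by
  ext c
  simp only [mem_iUnion, exists_prop, mem_ofPred_eq]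
  constructor
  · rintro ⟨hac, hcb⟩
    obtain ⟨u, hcu, hub⟩ := exists_le_covBy_of_lt hcb
    exact ⟨u, hub, hac, hcu⟩
  · rintro ⟨u, hub, hac, hcu⟩
    exact ⟨hac, hcu.trans_lt hub.lt⟩

theorem setOf_covBy_eq_pair (hxz : x ⋖ z) (hyz : y ⋖ z)
    (hz : ∀ u, u ⋖ z → u = x ∨ u = y) : {u | u ⋖ z} = {x, y} := by
  refine Subset.antisymm hz ?_
  rintro u (rfl | rfl)
  exacts [hxz, hyz]

theorem IsDiamond.Icc_eq [IsStronglyCoatomic α] (hd : IsDiamond w x y z)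
    (hz : ∀ u, u ⋖ z → u = x ∨ u = y) : Icc w z = {w, x, y, z} := by
  obtain ⟨-, hwx, hwy, hxz, hyz⟩ := hd
  calc
    Icc w z = insert z (Ico w z) := (Ico_insert_right (hwx.le.trans hxz.le)).symm
    _ = insert z (⋃ u ∈ {u | u ⋖ z}, Icc w u) := by rw [Ico_eq_biUnion_covBy]
    _ = insert z (Icc w x ∪ Icc w y) := by rw [setOf_covBy_eq_pair hxz hyz hz, biUnion_pair]
    _ = insert z ({w, x} ∪ {w, y}) := by rw [hwx.Icc_eq, hwy.Icc_eq]
    _ = {w, x, y, z} := by grind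

theorem AxFT.axD3MF (hFT : AxFT α) : AxD3MF α :=
  fun w x y z hI => hFT w x y z hI.1

theorem AxFT.propDAI [IsStronglyCoatomic α] (hFT : AxFT α) : PropDAI α :=
  fun w x y z hd => hd.Icc_eq (hFT w x y z hd)

theorem AxD3MF.axFT (hMF : AxD3MF α) (hDAI : PropDAI α) : AxFT α :=
  fun w x y z hd => hMF w x y z ⟨hd, hDAI w x y z hd⟩

theorem stmt_13_general [IsStronglyCoatomic α] : AxFT α ↔ AxD3MF α ∧ PropDAI α :=
  ⟨fun hFT => ⟨hFT.axD3MF, hFT.propDAI⟩, fun ⟨hMF, hDAI⟩ => hMF.axFT hDAI⟩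

end PartialOrder

/-- Corollary 4.2: FT holds iff D3MF and DAI hold. -/
theorem stmt_13 {α : Type*} [PartialOrder α] (hLF : ∀ a b : α, (Set.Icc a b).Finite) :
    AxFT α ↔ AxD3MF α ∧ PropDAI α := by
  let _ : LocallyFiniteOrder α := LocallyFiniteOrder.ofFiniteIcc hLF
  exact stmt_13_general

end DCompleteStmt
end

section
/- Theorem 4.3(b): If a finite partially ordered set satisfies Axiom VT, then it is ranked and has Property CLE. -/
namespace DCompleteStmt

variable {α : Type*}

/-!
Walk upwards along covers until no cover is left, choosing one cover of each element that has any,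
and let `h x` be the number of steps from `x`. If `x` is the chosen cover of `w` and `y` is another
one, Axiom VT gives `z` covering both; inductively `h x = h z + 1 = h y`, so the choice of cover did
not matter. Hence `-h` is a rank function, and every covering chain has length the difference in
rank of its ends.
-/

section Descent

variable {β : Type*} {r : β → β → Prop}

theorem exists_nat_eq_succ_along_some_step (hwf : WellFounded (Function.swap r)) :
    ∃ h : β → ℕ, ∀ w x, r w x → ∃ y, r w y ∧ h w = h y + 1 := by
  classical
  let countSteps (w : β) (count : ∀ y, r w y → ℕ) : ℕ :=
    if hw : ∃ y, r w y then count hw.choose hw.choose_spec + 1 else 0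
  refine ⟨hwf.fix countSteps, fun w x hwx => ?_⟩
  have hw : ∃ y, r w y := ⟨x, hwx⟩
  refine ⟨hw.choose, hw.choose_spec, ?_⟩
  rw [hwf.fix_eq]
  exact dif_pos hw

theorem eq_succ_along_every_step_of_diamond (hwf : WellFounded (Function.swap r))
    (hdiamond : ∀ w x y, x ≠ y → r w x → r w y → ∃ z, r x z ∧ r y z)
    {h : β → ℕ} (hstep : ∀ w x, r w x → ∃ y, r w y ∧ h w = h y + 1)
    {w x : β} (hwx : r w x) : h w = h x + 1 := by
  induction w using hwf.induction generalizing x with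
  | _ w ih =>
    obtain ⟨y, hwy, hy⟩ := hstep w x hwx
    by_cases hxy : x = y
    · rw [hy, hxy]
    · obtain ⟨z, hxz, hyz⟩ := hdiamond w x y hxy hwx hwy
      calc
        h w = h y + 1 := hy
        _ = (h z + 1) + 1 := by rw [ih y hwy hyz]
        _ = h x + 1 := by rw [ih x hwx hxz]

end Descent

theorem AxVT.isRanked [PartialOrder α] (hVT : AxVT α)
    (hwf : WellFounded (Function.swap (· ⋖ · : α → α → Prop))) : IsRanked α := by
  obtain ⟨h, hstep⟩ := exists_nat_eq_succ_along_some_step hwf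
  have hdiamond (w x y : α) (hxy : x ≠ y) (hwx : w ⋖ x) (hwy : w ⋖ y) : ∃ z, x ⋖ z ∧ y ⋖ z :=
    hVT w x y ⟨hxy, hwx, hwy⟩
  refine ⟨fun x => -(h x : ℤ), fun x y hxy => ?_⟩
  have hsucc : h x = h y + 1 :=
    eq_succ_along_every_step_of_diamond hwf hdiamond hstep hxy
  lia

theorem IsCovChain.rank_eq_add_length [PartialOrder α] {R : Type*} [AddMonoidWithOne R]
    {ρ : α → R} (hρ : ∀ x y, x ⋖ y → ρ y = ρ x + 1) {f : ℕ → α} {n : ℕ} {a b : α}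
    (hf : IsCovChain f n a b) : ρ b = ρ a + n := by
  obtain ⟨rfl, rfl, hcov⟩ := hf
  induction n with
  | zero => rw [Nat.cast_zero, add_zero]
  | succ n ih =>
    rw [hρ _ _ (hcov n n.lt_succ_self), ih fun i hi => hcov i (hi.trans n.lt_succ_self),
      Nat.cast_succ, add_assoc]

theorem IsRanked.propCLE [PartialOrder α] (hα : IsRanked α) : PropCLE α := by
  obtain ⟨ρ, hρ⟩ := hα
  intro x y _ n m f g hf hg
  have hcast : (n : ℤ) = m :=
    add_left_cancel ((hf.rank_eq_add_length hρ).symm.trans (hg.rank_eq_add_length hρ))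
  exact_mod_cast hcast

theorem stmt_15_general [PartialOrder α]
    (hwf : WellFounded (Function.swap (· ⋖ · : α → α → Prop))) (hVT : AxVT α) :
    IsRanked α ∧ PropCLE α :=
  have hα : IsRanked α := hVT.isRanked hwf
  ⟨hα, hα.propCLE⟩

/-- Theorem 4.3(b): a finite VT poset is ranked and has CLE. -/
theorem stmt_15 {α : Type*} [PartialOrder α] [Fintype α]
    (hVT : AxVT α) : IsRanked α ∧ PropCLE α :=
  stmt_15_general (Subrelation.wf CovBy.lt wellFounded_gt) hVT

end DCompleteStmt
end

section
/- Theorem 4.3(c): If a finite partially ordered set satisfies Axiom VT and has Property NTC, then it has Property SS. -/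
namespace DCompleteStmt

variable {α : Type*}

/-!
Under VT all covers of an element `w` have the same coheight: two distinct covers have a common
cover, so well-founded induction from above applies. Thus the coheight is finite and drops by
exactly one along each cover. If `w ⋖ u ⋖ z`, every element strictly between `w` and `z` therefore
covers `w`, and NTC leaves room for at most two such elements.
-/

open Order Set

lemma coheight_eq_add_one_of_forall_covBy [Preorder α] [IsStronglyAtomic α] {x y : α}
    (hxy : x ⋖ y) (hmax : ∀ y', x ⋖ y' → coheight y' ≤ coheight y) :
    coheight x = coheight y + 1 := by
  refine le_antisymm ?_ (coheight_add_one_le hxy.lt)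
  rw [coheight_eq_iSup_gt_coheight]
  refine iSup₂_le fun b hxb ↦ ?_
  obtain ⟨y', hxy', hy'b⟩ := exists_covBy_le_of_lt hxb
  exact add_le_add_left ((coheight_anti hy'b).trans (hmax y' hxy')) 1

section UniformCoheight

variable [PartialOrder α] [IsStronglyAtomic α] [WellFoundedGT α] {w x y u v z : α}

theorem AxVT.coheight_eq_add_one_of_covBy (hVT : AxVT α) (hxy : x ⋖ y) :
    coheight x = coheight y + 1 := by
  induction x using WellFoundedGT.induction generalizing y with
  | _ x ih =>
    refine coheight_eq_add_one_of_forall_covBy hxy fun y' hxy' ↦ ?_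
    obtain rfl | hne := eq_or_ne y' y
    · exact le_rfl
    · obtain ⟨t, hy't, hyt⟩ := hVT x y' y ⟨hne, hxy', hxy⟩
      exact ((ih y' hxy'.lt hy't).trans (ih y hxy.lt hyt).symm).le

lemma AxVT.coheight_lt_top (hVT : AxVT α) (x : α) : coheight x < ⊤ := by
  induction x using WellFoundedGT.induction with
  | _ x ih =>
    by_cases hx : IsMax x
    · simp [coheight_eq_zero.2 hx]
    · obtain ⟨b, hxb⟩ := not_isMax_iff.1 hx
      obtain ⟨y, hxy, -⟩ := exists_covBy_le_of_lt hxb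
      rw [hVT.coheight_eq_add_one_of_covBy hxy]
      exact ENat.add_lt_top.2 ⟨ih y hxy.lt, ENat.one_lt_top⟩

lemma AxVT.coheight_eq_of_covBy_of_covBy (hVT : AxVT α) (hwx : w ⋖ x) (hwy : w ⋖ y) :
    coheight x = coheight y := by
  have h : coheight x + 1 = coheight y + 1 :=
    (hVT.coheight_eq_add_one_of_covBy hwx).symm.trans (hVT.coheight_eq_add_one_of_covBy hwy)
  exact WithTop.add_right_cancel ENat.one_ne_top h

theorem AxVT.covBy_of_mem_Ioo (hVT : AxVT α) (hwu : w ⋖ u) (huz : u ⋖ z) (hv : v ∈ Ioo w z) :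
    w ⋖ v := by
  obtain ⟨v', hwv', hv'v⟩ := exists_covBy_le_of_lt hv.1
  obtain rfl | hlt := hv'v.eq_or_lt
  · exact hwv'
  · have : coheight v < coheight v := calc
      coheight v < coheight v' := coheight_strictAnti hlt (hVT.coheight_lt_top v)
      _ = coheight u := hVT.coheight_eq_of_covBy_of_covBy hwv' hwu
      _ = coheight z + 1 := hVT.coheight_eq_add_one_of_covBy huz
      _ ≤ coheight v := coheight_add_one_le hv.2
    exact absurd this (lt_irrefl _)

end UniformCoheight

section Cardinality

variable [PartialOrder α]

lemma PropNTC.encard_setOf_covBy_le_two (hNTC : PropNTC α) (w : α) :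
    {x | w ⋖ x}.encard ≤ 2 := by
  by_contra! h
  obtain ⟨t, ht, hcard⟩ := exists_subset_encard_eq (k := 3) (Order.add_one_le_of_lt h)
  obtain ⟨x, y, u, hxy, hxu, hyu, rfl⟩ := encard_eq_three.1 hcard
  exact hNTC ⟨w, x, y, u, hxy, hxu, hyu, ht (by simp), ht (by simp), ht (by simp)⟩

lemma ncard_Icc_eq_ncard_Ioo_add_two {a b : α} (h : a < b) (hfin : (Ioo a b).Finite) :
    (Icc a b).ncard = (Ioo a b).ncard + 2 := by
  rw [← Ioo_union_both h.le, ncard_union_eq (by simp) hfin, ncard_pair h.ne]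

theorem stmt_16_general [WellFoundedGT α] [IsStronglyAtomic α]
    (hVT : AxVT α) (hNTC : PropNTC α) : PropSS α := by
  intro w u z hwu huz
  have hIoo : Ioo w z ⊆ {v | w ⋖ v} := fun _ hv ↦ hVT.covBy_of_mem_Ioo hwu huz hv
  obtain ⟨hfin, hle⟩ : (Ioo w z).Finite ∧ (Ioo w z).ncard ≤ 2 :=
    encard_le_coe_iff_finite_ncard_le.1 <| (encard_le_encard hIoo).trans
      (hNTC.encard_setOf_covBy_le_two w)
  have hpos : 0 < (Ioo w z).ncard := (ncard_pos hfin).2 ⟨u, hwu.lt, huz.lt⟩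
  rw [ncard_Icc_eq_ncard_Ioo_add_two (hwu.lt.trans huz.lt) hfin]
  omega

end Cardinality

/-- Theorem 4.3(c): a finite VT poset with NTC has SS. -/
theorem stmt_16 {α : Type*} [PartialOrder α] [Fintype α]
    (hVT : AxVT α) (hNTC : PropNTC α) : PropSS α :=
  stmt_16_general hVT hNTC

end DCompleteStmt
end

section
/- Theorem 4.3(d): If a finite partially ordered set satisfies Axiom D3⁻CF, then it has Property NTC. -/
/-!
Three elements covering `w` form three vees. The elements completing these vees are distinct,
because each covers only its own two elbows, and any two of them cover a common one of the three
original elements. So they again form three vees, one level higher; repeating this would give an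
infinite strictly ascending chain.
-/

namespace DCompleteStmt

variable {α : Type*}

section

variable [PartialOrder α]

/-- Three elements any two of which are the elbows of some vee. The three vees need not share their
bottom element: this is what makes the notion pass from `x`, `y`, `u` to the elements completing
their vees. -/
def IsVeeTriangle (x y u : α) : Prop :=
  (∃ w, IsVee w x y) ∧ (∃ w, IsVee w x u) ∧ ∃ w, IsVee w y u

theorem IsVeeTriangle.of_covBy {w x y u : α} (hxy : x ≠ y) (hxu : x ≠ u) (hyu : y ≠ u)
    (hx : w ⋖ x) (hy : w ⋖ y) (hu : w ⋖ u) : IsVeeTriangle x y u :=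
  ⟨⟨w, hxy, hx, hy⟩, ⟨w, hxu, hx, hu⟩, ⟨w, hyu, hy, hu⟩⟩

theorem AxD3CF.exists_covBy_iff (h : AxD3CF α) {w x y : α} (hvee : IsVee w x y) :
    ∃ z, ∀ v, v ⋖ z ↔ v = x ∨ v = y := by
  obtain ⟨z, ⟨⟨_, _, _, hxz, hyz⟩, _⟩, honly⟩ := h w x y hvee
  refine ⟨z, fun v => ⟨honly v, ?_⟩⟩
  rintro (rfl | rfl)
  exacts [hxz, hyz]

theorem AxD3CF.exists_isVeeTriangle_covBy (h : AxD3CF α) {x y u : α}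
    (htri : IsVeeTriangle x y u) : ∃ p q r, x ⋖ p ∧ IsVeeTriangle p q r := by
  obtain ⟨⟨_, hxy⟩, ⟨_, hxu⟩, ⟨_, hyu⟩⟩ := htri
  obtain ⟨p, hp⟩ := h.exists_covBy_iff hxy
  obtain ⟨q, hq⟩ := h.exists_covBy_iff hxu
  obtain ⟨r, hr⟩ := h.exists_covBy_iff hyu
  have hxp : x ⋖ p := (hp x).2 (.inl rfl)
  have hyp : y ⋖ p := (hp y).2 (.inr rfl)
  have hxq : x ⋖ q := (hq x).2 (.inl rfl)
  have huq : u ⋖ q := (hq u).2 (.inr rfl)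
  have hyr : y ⋖ r := (hr y).2 (.inl rfl)
  have hur : u ⋖ r := (hr u).2 (.inr rfl)
  have hup : ¬ u ⋖ p := fun hup => ((hp u).1 hup).elim hxu.1.symm hyu.1.symm
  have hyq : ¬ y ⋖ q := fun hyq => ((hq y).1 hyq).elim hxy.1.symm hyu.1
  have hpq : p ≠ q := fun hpq => hup (hpq ▸ huq)
  have hpr : p ≠ r := fun hpr => hup (hpr ▸ hur)
  have hqr : q ≠ r := fun hqr => hyq (hqr ▸ hyr)
  exact ⟨p, q, r, hxp, ⟨x, hpq, hxp, hxq⟩, ⟨y, hpr, hyp, hyr⟩, ⟨u, hqr, huq, hur⟩⟩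

theorem AxD3CF.not_isVeeTriangle [WellFoundedGT α] (h : AxD3CF α) (x y u : α) :
    ¬ IsVeeTriangle x y u := by
  induction x using WellFoundedGT.induction generalizing y u with
  | ind x ih =>
    intro htri
    obtain ⟨p, q, r, hxp, htri'⟩ := h.exists_isVeeTriangle_covBy htri
    exact ih p hxp.lt q r htri'

end

theorem stmt_17_general {α : Type*} [PartialOrder α] [WellFoundedGT α]
    (hD3CF : AxD3CF α) : PropNTC α := by
  rintro ⟨w, x, y, u, hxy, hxu, hyu, hx, hy, hu⟩
  exact hD3CF.not_isVeeTriangle x y u (.of_covBy hxy hxu hyu hx hy hu)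

/-- Theorem 4.3(d): a finite D3⁻CF poset has NTC. -/
theorem stmt_17 {α : Type*} [PartialOrder α] [Fintype α]
    (hD3CF : AxD3CF α) : PropNTC α :=
  stmt_17_general hD3CF

end DCompleteStmt
end

section
/- Theorem 4.3(f): If a finite partially ordered set satisfies Axiom D3⁻C and Axiom D3MD, then it satisfies Axiom NCC and has Property NTC and Property UC3. -/
namespace DCompleteStmt

variable {α : Type*}

/-!
Two overlapping vees form a zigzag of covers that closes up after two steps, and three elements
covering `w`, together with the completing elements of the three vees they form over `w`, give one
that closes up after three. Completing every vee of a zigzag yields a zigzag one level up: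
consecutive completing elements are distinct, since by D3MD a common one would force the minima of
the two vees to agree. Iterating produces an infinite strictly ascending chain.
-/

namespace IsD3Interval

variable [PartialOrder α] {w w' x x' y y' z u : α}

theorem left_covBy (h : IsD3Interval w x y z) : x ⋖ z := h.1.2.2.2.1

theorem right_covBy (h : IsD3Interval w x y z) : y ⋖ z := h.1.2.2.2.2

theorem bot_le_top (h : IsD3Interval w x y z) : w ≤ z :=
  h.1.2.1.le.trans h.left_covBy.le

theorem eq_or_eq_of_lt_of_lt (h : IsD3Interval w x y z) (hwu : w < u) (huz : u < z) :
    u = x ∨ u = y := by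
  have hu : u ∈ ({w, x, y, z} : Set α) := h.2 ▸ ⟨hwu.le, huz.le⟩
  simpa [hwu.ne', huz.ne] using hu

theorem bot_unique (hMD : AxD3MD α) (h : IsD3Interval w x y z) (h' : IsD3Interval w' x' y' z) :
    w = w' := by
  have hIcc : Set.Icc w z = Set.Icc w' z := by
    rw [h.2, h'.2, hMD _ _ _ _ _ _ _ h h']
  exact (isLeast_Icc h.bot_le_top).unique (hIcc ▸ isLeast_Icc h'.bot_le_top)

end IsD3Interval

/-- A zigzag of covers: every lower element `a i` is covered by the upper elements `p i` and
`p (σ i)`, and consecutive elements on each level are distinct. The successor map `σ` is arbitrary,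
so that `i ↦ i + 1` on `Fin n` gives closed zigzags (crowns). -/
structure IsZigzag [PartialOrder α] {ι : Type*} (σ : ι → ι) (a p : ι → α) : Prop where
  covBy : ∀ i, a i ⋖ p i
  covBy_succ : ∀ i, a i ⋖ p (σ i)
  lower_ne : ∀ i, a i ≠ a (σ i)
  upper_ne : ∀ i, p i ≠ p (σ i)

section

variable [PartialOrder α]

namespace IsZigzag

variable {ι : Type*} {σ : ι → ι} {a p : ι → α}

theorem exists_isZigzag_above (hC : AxD3C α) (hMD : AxD3MD α) (h : IsZigzag σ a p) :
    ∃ q, IsZigzag σ (p ∘ σ) q := by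
  choose q hq using fun i ↦ hC (a i) (p i) (p (σ i)) ⟨h.upper_ne i, h.covBy i, h.covBy_succ i⟩
  refine ⟨q, fun i ↦ (hq i).right_covBy, fun i ↦ (hq (σ i)).left_covBy, fun i ↦ h.upper_ne (σ i),
    fun i hqi ↦ h.lower_ne i ?_⟩
  exact (hq i).bot_unique hMD (hqi ▸ hq (σ i))

theorem isEmpty_index [WellFoundedGT α] (hC : AxD3C α) (hMD : AxD3MD α) (h : IsZigzag σ a p) :
    IsEmpty ι := by
  refine ⟨fun i ↦ ?_⟩
  induction hw : a i using WellFoundedGT.induction generalizing a p with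
  | ind w ih =>
    obtain ⟨q, hq⟩ := h.exists_isZigzag_above hC hMD
    exact ih (p (σ i)) (hw ▸ (h.covBy_succ i).lt) hq rfl

end IsZigzag

theorem axNCC_of_axD3C_of_axD3MD [WellFoundedGT α] (hC : AxD3C α) (hMD : AxD3MD α) :
    AxNCC α := by
  rintro ⟨w, w', x, y, hw, hxy, hwx, hwy, hw'x, hw'y⟩
  have crown : IsZigzag (fun i : Fin 2 ↦ i + 1) ![w, w'] ![x, y] := by
    constructor <;> simp [Fin.forall_fin_two, *, hw.symm, hxy.symm]
  exact (crown.isEmpty_index hC hMD).false 0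

theorem exists_isZigzag_of_forall_covBy {ι : Type*} {σ : ι → ι} {w : α} {x : ι → α}
    (hC : AxD3C α) (hw : ∀ i, w ⋖ x i) (hne : ∀ i, x i ≠ x (σ i))
    (hne₂ : ∀ i, x i ≠ x (σ (σ i))) : ∃ z, IsZigzag σ (x ∘ σ) z := by
  choose z hz using fun i ↦ hC w (x i) (x (σ i)) ⟨hne i, hw i, hw (σ i)⟩
  refine ⟨z, fun i ↦ (hz i).right_covBy, fun i ↦ (hz (σ i)).left_covBy, fun i ↦ hne (σ i),
    fun i hzi ↦ ?_⟩
  have hlt : x (σ (σ i)) < z i := hzi ▸ (hz (σ i)).right_covBy.lt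
  rcases (hz i).eq_or_eq_of_lt_of_lt (hw (σ (σ i))).lt hlt with h | h
  · exact hne₂ i h.symm
  · exact hne (σ i) h.symm

theorem propNTC_of_axD3C_of_axD3MD [WellFoundedGT α] (hC : AxD3C α) (hMD : AxD3MD α) :
    PropNTC α := by
  rintro ⟨w, x, y, u, hxy, hxu, hyu, hwx, hwy, hwu⟩
  obtain ⟨z, crown⟩ : ∃ z, IsZigzag (fun i : Fin 3 ↦ i + 1) (![x, y, u] ∘ (· + 1)) z := by
    apply exists_isZigzag_of_forall_covBy (w := w) hC <;>
      simp [Fin.forall_fin_succ, *, hxy.symm, hxu.symm, hyu.symm]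
  exact (crown.isEmpty_index hC hMD).false 0

theorem propUC3_of_axD3C_of_axNCC (hC : AxD3C α) (hNCC : AxNCC α) : PropUC3 α := by
  intro w x y hv
  obtain ⟨z, hz⟩ := hC w x y hv
  refine ⟨z, hz, fun z' hz' ↦ by_contra fun hne ↦ hNCC ?_⟩
  exact ⟨x, y, z', z, hv.1, hne, hz'.left_covBy, hz.left_covBy, hz'.right_covBy, hz.right_covBy⟩

theorem stmt_19_general [WellFoundedGT α] (hD3C : AxD3C α) (hD3MD : AxD3MD α) :
    AxNCC α ∧ PropNTC α ∧ PropUC3 α :=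
  have hNCC := axNCC_of_axD3C_of_axD3MD hD3C hD3MD
  ⟨hNCC, propNTC_of_axD3C_of_axD3MD hD3C hD3MD, propUC3_of_axD3C_of_axNCC hD3C hNCC⟩

end

/-- Theorem 4.3(f): a finite poset with D3⁻C and D3MD satisfies NCC
and has NTC and UC3. -/
theorem stmt_19 {α : Type*} [PartialOrder α] [Fintype α]
    (hD3C : AxD3C α) (hD3MD : AxD3MD α) : AxNCC α ∧ PropNTC α ∧ PropUC3 α :=
  stmt_19_general hD3C hD3MD

end DCompleteStmt
end
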